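/- Consider the uncertain system ẋ = Ax + B₁w + B₂u, z = C₁x, w = Δ(s)z, with A ∈ ℝ^{n×n}, B₁ ∈ ℝ^{n×m}, B₂ ∈ ℝ^{n×p}, C₁ ∈ ℝ^{m×n}. Suppose there exist a real symmetric matrix Y ≻ 0, a real matrix M ∈ ℝ^{p×n}, and a scalar ε > 0 such that: (a) the block matrix [[AY + YAᵀ + B₂M + MᵀB₂ᵀ + εI, B₁ + AYC₁ᵀ + B₂MC₁ᵀ], [B₁ᵀ + C₁YAᵀ + C₁MᵀB₂ᵀ, 0]] ⪯ 0, and (b) C₁YC₁ᵀ − I ≺ 0. Let K = MY⁻¹. Then for every uncertainty Δ given by a minimal realization (A_Δ, B_Δ, C_Δ, D_Δ) that is strictly negative imaginary with every eigenvalue of Δ(0) = D_Δ − C_ΔA_Δ⁻¹B_Δ lying in [−1, 1] and D_Δ ⪰ 0, the closed-loop state matrix [[A + B₂K + B₁D_ΔC₁, B₁C_Δ], [B_ΔC₁, A_Δ]] is Hurwitz; i.e., the state-feedback law u = Kx robustly stabilizes the uncertain system. -/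

import Mathlib

open Matrix Filter Topology ComplexOrder

/-- The (complex) eigenvalues of a real square matrix. -/
noncomputable def eigs {k : Type*} [Fintype k] [DecidableEq k] (A : Matrix k k ℝ) : Set ℂ :=
  spectrum ℂ (A.map Complex.ofReal)

/-- A real square matrix is Hurwitz if all of its (complex) eigenvalues have negative real
part. -/
noncomputable def IsHurwitz {k : Type*} [Fintype k] [DecidableEq k] (A : Matrix k k ℝ) : Prop :=
  ∀ μ ∈ eigs A, μ.re < 0

/-- Transfer function `R(s) = C (sI - A)⁻¹ B + D` of a real state-space system, as a
complex matrix. -/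
noncomputable def tf {n m : ℕ} (A : Matrix (Fin n) (Fin n) ℝ) (B : Matrix (Fin n) (Fin m) ℝ)
    (C : Matrix (Fin m) (Fin n) ℝ) (D : Matrix (Fin m) (Fin m) ℝ) (s : ℂ) :
    Matrix (Fin m) (Fin m) ℂ :=
  C.map (Complex.ofReal) * (s • (1 : Matrix (Fin n) (Fin n) ℂ) - A.map Complex.ofReal)⁻¹ *
      B.map Complex.ofReal + D.map Complex.ofReal

/-- A state-space realization `(A,B,C,D)` is minimal if the controllability matrix and the
observability matrix both have rank `n`. -/
def IsMinimal {n m : ℕ} (A : Matrix (Fin n) (Fin n) ℝ) (B : Matrix (Fin n) (Fin m) ℝ)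
    (C : Matrix (Fin m) (Fin n) ℝ) : Prop :=
  (Matrix.of fun (i : Fin n) (p : Fin n × Fin m) => (A ^ (p.1 : ℕ) * B) i p.2).rank = n ∧
  (Matrix.of fun (p : Fin n × Fin m) (i : Fin n) => (C * A ^ (p.1 : ℕ)) p.2 i).rank = n

/-- The system `(A,B,C,D)` is negative imaginary (NI). -/
noncomputable def IsNI {n m : ℕ} (A : Matrix (Fin n) (Fin n) ℝ) (B : Matrix (Fin n) (Fin m) ℝ)
    (C : Matrix (Fin m) (Fin n) ℝ) (D : Matrix (Fin m) (Fin m) ℝ) : Prop :=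
  (∀ μ ∈ eigs A, μ ≠ 0 ∧ μ.re ≤ 0) ∧
  (∀ ω : ℝ, 0 < ω → (Complex.I * ω) ∉ eigs A →
    (Complex.I • (tf A B C D (Complex.I * ω) - (tf A B C D (Complex.I * ω))ᴴ)).PosSemidef) ∧
  (∀ ω : ℝ, 0 < ω → (Complex.I * ω) ∈ eigs A →
    ∃ K : Matrix (Fin m) (Fin m) ℂ,
      Tendsto (fun s : ℂ => (s - Complex.I * ω) • Complex.I • tf A B C D s)
        (𝓝[≠] (Complex.I * ω)) (𝓝 K) ∧ K.PosSemidef)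

/-- The system `(A,B,C,D)` is strictly negative imaginary (SNI). -/
noncomputable def IsSNI {n m : ℕ} (A : Matrix (Fin n) (Fin n) ℝ) (B : Matrix (Fin n) (Fin m) ℝ)
    (C : Matrix (Fin m) (Fin n) ℝ) (D : Matrix (Fin m) (Fin m) ℝ) : Prop :=
  IsHurwitz A ∧
  (∀ ω : ℝ, 0 < ω →
    (Complex.I • (tf A B C D (Complex.I * ω) - (tf A B C D (Complex.I * ω))ᴴ)).PosDef)

/-!
Put `F = A + B₂ * K`, so that `F * Y = A * Y + B₂ * M`. The zero diagonal block of the linear matrix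
inequality forces `B₁ = -F * Y * C₁ᵀ`, and the other one makes `P = F * Y` strictly dissipative.
Eliminating the state of `Δ` by a Schur complement, a point `s` with `0 ≤ s.re` is an eigenvalue of
the closed loop iff it is an eigenvalue of `F + B₁ * Δ(s) * C₁ = P * S`, where
`S = (Y⁻¹ - C₁ᵀ * C₁) + C₁ᵀ * (1 - Δ(s)) * C₁`. The first summand is positive definite because
`C₁ * Y * C₁ᵀ ≺ 1`. On the imaginary axis, the negative imaginary property says that
`(Δ(0) - Δ(s)) / s` has nonnegative real part, and the Phragmén–Lindelöf principle extends this to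
the right half-plane; together with `Δ(0) ⪯ 1` it gives `0 ≤ Re (star s * ⟨x, S x⟩)` for all `x`.
But if `P S x = s x`, then `⟨S x, P S x⟩` is the conjugate of `star s * ⟨x, S x⟩`, so dissipativity
of `P` leaves only `S x = 0`, hence `s = 0`, where `S` is positive definite.
-/

theorem nonsing_inv_neg {n R : Type*} [Fintype n] [DecidableEq n] [CommRing R]
    (M : Matrix n n R) : (-M)⁻¹ = -M⁻¹ := by
  by_cases h : IsUnit M.det
  · exact inv_eq_right_inv (by rw [neg_mul_neg, mul_nonsing_inv M h])
  · have hneg : ¬IsUnit (-M).det := by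
      rwa [← isUnit_iff_isUnit_det, IsUnit.neg_iff, isUnit_iff_isUnit_det]
    rw [nonsing_inv_apply_not_isUnit M h, nonsing_inv_apply_not_isUnit _ hneg, neg_zero]

section Complexification

variable {k l m : Type*}

theorem map_ofReal_mul [Fintype l] (M : Matrix k l ℝ) (N : Matrix l m ℝ) :
    (M * N).map Complex.ofReal = M.map Complex.ofReal * N.map Complex.ofReal :=
  Matrix.map_mul (f := Complex.ofRealHom)

theorem conjTranspose_map_ofReal (M : Matrix k l ℝ) :
    (M.map Complex.ofReal)ᴴ = Mᵀ.map Complex.ofReal := by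
  ext i j
  simp

theorem map_ofReal_inv [Fintype k] [DecidableEq k] (M : Matrix k k ℝ) :
    M⁻¹.map Complex.ofReal = (M.map Complex.ofReal)⁻¹ := by
  have hdet : (M.map Complex.ofReal).det = (M.det : ℂ) :=
    (RingHom.map_det Complex.ofRealHom M).symm
  have hadj : (M.map Complex.ofReal).adjugate = M.adjugate.map Complex.ofReal :=
    (RingHom.map_adjugate Complex.ofRealHom M).symm
  ext i j
  simp [Matrix.inv_def, hdet, hadj]

theorem isUnit_map_ofReal_iff [Fintype k] [DecidableEq k] {M : Matrix k k ℝ} :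
    IsUnit (M.map Complex.ofReal) ↔ IsUnit M := by
  have hdet : (M.map Complex.ofReal).det = (M.det : ℂ) :=
    (RingHom.map_det Complex.ofRealHom M).symm
  simp [isUnit_iff_isUnit_det, hdet]

open scoped MatrixOrder Matrix.Norms.L2Operator in
theorem posSemidef_map_ofReal [Finite k] {M : Matrix k k ℝ} (h : M.PosSemidef) :
    (M.map Complex.ofReal).PosSemidef := by
  classical
  have := Fintype.ofFinite k
  obtain ⟨R, rfl⟩ := CStarAlgebra.nonneg_iff_eq_star_mul_self.mp h.nonneg
  rw [map_ofReal_mul, star_eq_conjTranspose, conjTranspose_eq_transpose_of_trivial,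
    ← conjTranspose_map_ofReal]
  exact posSemidef_conjTranspose_mul_self _

theorem posDef_map_ofReal [Finite k] {M : Matrix k k ℝ} (h : M.PosDef) :
    (M.map Complex.ofReal).PosDef := by
  classical
  have := Fintype.ofFinite k
  exact (posSemidef_map_ofReal h.posSemidef).posDef_iff_isUnit.mpr
    (isUnit_map_ofReal_iff.mpr h.isUnit)

end Complexification

section Definite

variable {m n 𝕜 : Type*} [RCLike 𝕜]

theorem apply_eq_zero_of_posSemidef_of_diag_eq_zero [Finite n] {M : Matrix n n 𝕜}
    (hM : M.PosSemidef) {j : n} (hj : M j j = 0) (i : n) : M i j = 0 := by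
  classical
  have := Fintype.ofFinite n
  have hcol : M *ᵥ Pi.single j 1 = 0 :=
    (hM.dotProduct_mulVec_zero_iff _).mp (by simp [hj])
  simpa using congrFun hcol i

variable [Fintype n]

theorem posDef_inv_sub_conjTranspose_mul_self [Fintype m] [DecidableEq m] [DecidableEq n]
    {Y : Matrix n n 𝕜} {C : Matrix m n 𝕜} (hY : Y.PosDef) (h : (1 - C * Y * Cᴴ).PosDef) :
    (Y⁻¹ - Cᴴ * C).PosDef := by
  -- Both matrices are Schur complements in the block matrix `[Y⁻¹, Cᴴ; C, 1]`.
  let : Invertible (1 : Matrix m m 𝕜) := invertibleOne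
  let := hY.isUnit.invertible
  let := hY.inv.isUnit.invertible
  have hblock : (fromBlocks Y⁻¹ Cᴴ C 1).PosSemidef := by
    simpa using (PosDef.fromBlocks₁₁ Cᴴ 1 hY.inv).mpr (by simpa using h.posSemidef)
  have hunit : IsUnit (fromBlocks Y⁻¹ Cᴴ C 1) :=
    isUnit_fromBlocks_iff_of_invertible₁₁.mpr (by simpa using h.isUnit)
  refine PosSemidef.posDef_iff_isUnit ?_ |>.mpr ?_
  · simpa using (PosDef.fromBlocks₂₂ Y⁻¹ Cᴴ (D := 1) .one).mp (by simpa using hblock)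
  · simpa using isUnit_fromBlocks_iff_of_invertible₂₂.mp hunit

theorem star_dotProduct_conjTranspose_mulVec (M : Matrix n n 𝕜) (x : n → 𝕜) :
    star x ⬝ᵥ (Mᴴ *ᵥ x) = star (star x ⬝ᵥ (M *ᵥ x)) := by
  rw [← star_dotProduct, star_mulVec, dotProduct_mulVec]

theorem star_dotProduct_conjTranspose_mul_mul_mulVec [Fintype m] (N : Matrix m m 𝕜)
    (C : Matrix m n 𝕜) (x : n → 𝕜) :
    star x ⬝ᵥ ((Cᴴ * N * C) *ᵥ x) = star (C *ᵥ x) ⬝ᵥ (N *ᵥ (C *ᵥ x)) := by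
  rw [star_mulVec, ← dotProduct_mulVec, mulVec_mulVec, mulVec_mulVec]

theorem exists_mulVec_eq_smul_of_mem_spectrum [DecidableEq n] {M : Matrix n n 𝕜} {μ : 𝕜}
    (hμ : μ ∈ spectrum 𝕜 M) : ∃ x ≠ 0, M *ᵥ x = μ • x := by
  rw [← spectrum_toLin'] at hμ
  obtain ⟨x, hx⟩ := (Module.End.HasEigenvalue.of_mem_spectrum hμ).exists_hasEigenvector
  exact ⟨x, hx.2, by simpa using hx.apply_eq_smul⟩

theorem notMem_spectrum_mul_of_posDef_neg_add_conjTranspose [DecidableEq n] {P S : Matrix n n ℂ}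
    {s : ℂ} (hP : (-(P + Pᴴ)).PosDef) (hS : ∀ x, 0 ≤ (star s * (star x ⬝ᵥ (S *ᵥ x))).re)
    (hS₀ : s = 0 → IsUnit S) : s ∉ spectrum ℂ (P * S) := by
  intro hs
  obtain ⟨x, hx, hPSx⟩ := exists_mulVec_eq_smul_of_mem_spectrum hs
  have hform : star (S *ᵥ x) ⬝ᵥ (P *ᵥ (S *ᵥ x)) = star (star s * (star x ⬝ᵥ (S *ᵥ x))) := by
    rw [mulVec_mulVec, hPSx, dotProduct_smul, star_dotProduct, smul_eq_mul, star_mul', star_star]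
  have hSx : S *ᵥ x = 0 := by
    by_contra hne
    have hneg := hP.re_dotProduct_pos hne
    rw [neg_mulVec, add_mulVec, dotProduct_neg, dotProduct_add,
      star_dotProduct_conjTranspose_mulVec, hform] at hneg
    have hnonneg := hS x
    simp only [RCLike.re_to_complex, Complex.neg_re, Complex.add_re, RCLike.star_def,
      Complex.conj_re] at hneg hnonneg
    linarith
  have hs₀ : s = 0 := by
    rw [← mulVec_mulVec, hSx, mulVec_zero] at hPSx
    exact (smul_eq_zero.mp hPSx.symm).resolve_right hx
  exact hx (mulVec_injective_of_isUnit (hS₀ hs₀) (by rw [hSx, mulVec_zero]))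

end Definite

section HalfPlane

open Bornology Complex

theorem re_nonneg_of_re_nonneg_imaginary_axis {f : ℂ → ℂ} (hd : DiffContOnCl ℂ f {z | 0 < z.re})
    (hb : (cobounded ℂ ⊓ 𝓟 {z | 0 < z.re}).IsBoundedUnder (· ≥ ·) fun z => (f z).re)
    (him : ∀ x : ℝ, 0 ≤ (f (x * I)).re) {z : ℂ} (hz : 0 ≤ z.re) : 0 ≤ (f z).re := by
  obtain ⟨b, hb⟩ := hb.eventually_ge
  have hbound : ∀ᶠ z in cobounded ℂ ⊓ 𝓟 {z | 0 < z.re}, ‖exp (-f z)‖ ≤ Real.exp (-b) := by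
    filter_upwards [hb] with z hz
    simpa [norm_exp] using hz
  have hreal : Tendsto ofReal atTop (cobounded ℂ ⊓ 𝓟 {z | 0 < z.re}) := by
    refine tendsto_inf.mpr ⟨RCLike.tendsto_ofReal_atTop_cobounded ℂ, tendsto_principal.mpr ?_⟩
    filter_upwards [eventually_gt_atTop 0] with x hx using by simpa using hx
  have hexp : ‖exp (-f z)‖ ≤ 1 := by
    refine PhragmenLindelof.right_half_plane_of_bounded_on_real (f := fun z => exp (-f z))
      (differentiable_exp.comp_diffContOnCl hd.neg) ⟨0, two_pos, 0, ?_⟩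
      (isBoundedUnder_of_eventually_le (hreal.eventually hbound)) (fun x => ?_) hz
    · exact .of_bound (Real.exp (-b)) (by simpa using hbound)
    · simpa [norm_exp] using him x
  simpa [norm_exp] using hexp

end HalfPlane

theorem IsHurwitz.mem_resolventSet {k : Type*} [Fintype k] [DecidableEq k] {A : Matrix k k ℝ}
    (hA : IsHurwitz A) {s : ℂ} (hs : 0 ≤ s.re) : s ∈ resolventSet ℂ (A.map Complex.ofReal) := by
  by_contra h
  exact (hA s h).not_ge hs

theorem IsHurwitz.isUnit {k : Type*} [Fintype k] [DecidableEq k] {A : Matrix k k ℝ}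
    (hA : IsHurwitz A) : IsUnit A := by
  simpa [spectrum.mem_resolventSet_iff, isUnit_map_ofReal_iff] using
    hA.mem_resolventSet (s := 0) le_rfl

section TransferFunction

open Complex Bornology

variable {n m : ℕ} {A : Matrix (Fin n) (Fin n) ℝ} {B : Matrix (Fin n) (Fin m) ℝ}
  {C : Matrix (Fin m) (Fin n) ℝ} {D : Matrix (Fin m) (Fin m) ℝ}

theorem tf_eq_resolvent (A : Matrix (Fin n) (Fin n) ℝ) (B : Matrix (Fin n) (Fin m) ℝ)
    (C : Matrix (Fin m) (Fin n) ℝ) (D : Matrix (Fin m) (Fin m) ℝ) (s : ℂ) :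
    tf A B C D s =
      C.map ofReal * resolvent (A.map ofReal) s * B.map ofReal + D.map ofReal := by
  rw [tf, resolvent, nonsing_inv_eq_ringInverse, Algebra.algebraMap_eq_smul_one]

theorem tf_star (A : Matrix (Fin n) (Fin n) ℝ) (B : Matrix (Fin n) (Fin m) ℝ)
    (C : Matrix (Fin m) (Fin n) ℝ) (D : Matrix (Fin m) (Fin m) ℝ) (s : ℂ) :
    tf A B C D (star s) = (tf A B C D s)ᴴᵀ := by
  have hreal : ∀ {k l : ℕ} (M : Matrix (Fin k) (Fin l) ℝ), (M.map ofReal)ᴴᵀ = M.map ofReal := by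
    intro k l M
    rw [conjTranspose_map_ofReal, ← transpose_map, transpose_transpose]
  simp only [tf, conjTranspose_add, transpose_add, conjTranspose_mul, transpose_mul,
    conjTranspose_nonsing_inv, transpose_nonsing_inv, conjTranspose_sub, transpose_sub,
    conjTranspose_smul, transpose_smul, conjTranspose_one, transpose_one, hreal]

theorem star_dotProduct_tf_star_mulVec (A : Matrix (Fin n) (Fin n) ℝ)
    (B : Matrix (Fin n) (Fin m) ℝ) (C : Matrix (Fin m) (Fin n) ℝ) (D : Matrix (Fin m) (Fin m) ℝ)
    (s : ℂ) (z : Fin m → ℂ) :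
    star z ⬝ᵥ (tf A B C D (star s) *ᵥ z) = star (z ⬝ᵥ (tf A B C D s *ᵥ star z)) := by
  rw [tf_star, ← star_dotProduct_star, star_mulVec, star_star, mulVec_transpose,
    dotProduct_comm]

theorem tf_zero (A : Matrix (Fin n) (Fin n) ℝ) (B : Matrix (Fin n) (Fin m) ℝ)
    (C : Matrix (Fin m) (Fin n) ℝ) (D : Matrix (Fin m) (Fin m) ℝ) :
    tf A B C D 0 = (D - C * A⁻¹ * B).map ofReal := by
  rw [sub_eq_add_neg, Matrix.map_add _ ofReal_add, Matrix.map_neg _ ofReal_neg, map_ofReal_mul,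
    map_ofReal_mul, map_ofReal_inv, tf, zero_smul, zero_sub, nonsing_inv_neg, Matrix.mul_neg,
    Matrix.neg_mul, add_comm]

theorem tf_zero_sub_tf (hA : IsUnit A) {s : ℂ} (hs : s ∈ resolventSet ℂ (A.map ofReal)) :
    tf A B C D 0 - tf A B C D s = s • tf A B (-(C * A⁻¹)) 0 s := by
  rw [spectrum.mem_resolventSet_iff, Algebra.algebraMap_eq_smul_one] at hs
  have hA₀ : IsUnit (-A.map ofReal) := (isUnit_map_ofReal_iff.mpr hA).neg
  have hres : (-A.map ofReal)⁻¹ - (s • 1 - A.map ofReal)⁻¹ =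
      -s • ((A.map ofReal)⁻¹ * (s • 1 - A.map ofReal)⁻¹) := by
    rw [Matrix.inv_sub_inv (iff_of_true hA₀ hs), sub_neg_eq_add, sub_add_cancel, nonsing_inv_neg]
    simp
  calc tf A B C D 0 - tf A B C D s
      = C.map ofReal * ((-A.map ofReal)⁻¹ - (s • 1 - A.map ofReal)⁻¹) * B.map ofReal := by
        simp only [tf, zero_smul, zero_sub, add_sub_add_right_eq_sub, Matrix.mul_sub,
          Matrix.sub_mul]
    _ = s • tf A B (-(C * A⁻¹)) 0 s := by
        rw [hres, tf, Matrix.map_neg _ ofReal_neg, map_ofReal_mul, map_ofReal_inv]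
        simp [Matrix.mul_assoc]

section Continuity

attribute [local instance] Matrix.linftyOpNormedRing Matrix.linftyOpNormedAlgebra

theorem continuousAt_tf {s : ℂ} (hs : s ∈ resolventSet ℂ (A.map ofReal)) :
    ContinuousAt (tf A B C D) s := by
  have hcont : Continuous fun R : Matrix (Fin n) (Fin n) ℂ =>
      C.map ofReal * R * B.map ofReal + D.map ofReal := by fun_prop
  rw [funext (tf_eq_resolvent A B C D)]
  exact hcont.continuousAt.comp (spectrum.hasDerivAt_resolvent_const_left hs).continuousAt

theorem tendsto_tf_cobounded : Tendsto (tf A B C D) (cobounded ℂ) (𝓝 (D.map ofReal)) := by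
  have hcont : Continuous fun R : Matrix (Fin n) (Fin n) ℂ =>
      C.map ofReal * R * B.map ofReal + D.map ofReal := by fun_prop
  rw [funext (tf_eq_resolvent A B C D)]
  simpa [Function.comp_def] using
    (hcont.tendsto 0).comp (spectrum.resolvent_tendsto_cobounded (𝕜 := ℂ) (A.map ofReal))

theorem differentiableAt_dotProduct_tf_mulVec {s : ℂ} (hs : s ∈ resolventSet ℂ (A.map ofReal))
    (y z : Fin m → ℂ) : DifferentiableAt ℂ (fun s => y ⬝ᵥ (tf A B C D s *ᵥ z)) s := by
  have hR : DifferentiableAt ℂ (resolvent (A.map ofReal)) s :=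
    (spectrum.hasDerivAt_resolvent_const_left hs).differentiableAt
  let L : Matrix (Fin n) (Fin n) ℂ →ₗ[ℂ] ℂ :=
    { toFun := fun R => y ⬝ᵥ ((C.map ofReal * R * B.map ofReal) *ᵥ z)
      map_add' := fun R S => by simp [Matrix.mul_add, Matrix.add_mul, add_mulVec]
      map_smul' := fun c R => by simp [smul_mulVec] }
  simpa [tf_eq_resolvent, add_mulVec, L] using
    (L.toContinuousLinearMap.differentiableAt.comp s hR).add_const
      (y ⬝ᵥ (D.map ofReal *ᵥ z))

end Continuity

theorem re_dotProduct_tf_mulVec_nonneg (hA : IsHurwitz A)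
    (h : ∀ ω : ℝ, 0 < ω → ∀ z, 0 ≤ (star z ⬝ᵥ (tf A B C D (I * ω) *ᵥ z)).re)
    {s : ℂ} (hs : 0 ≤ s.re) (z : Fin m → ℂ) : 0 ≤ (star z ⬝ᵥ (tf A B C D s *ᵥ z)).re := by
  have hform : Continuous fun T : Matrix (Fin m) (Fin m) ℂ => (star z ⬝ᵥ (T *ᵥ z)).re := by
    fun_prop
  refine re_nonneg_of_re_nonneg_imaginary_axis (f := fun s => star z ⬝ᵥ (tf A B C D s *ᵥ z))
    (DifferentiableOn.diffContOnCl fun s hs => ?_) ?_ (fun ω => ?_) hs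
  · rw [closure_setOfPred_lt_re] at hs
    have hres := hA.mem_resolventSet hs
    exact (differentiableAt_dotProduct_tf_mulVec hres _ _).differentiableWithinAt
  · exact ((hform.tendsto _).comp tendsto_tf_cobounded).isBoundedUnder_ge.mono inf_le_left
  · rw [mul_comm]
    obtain hω | rfl | hω := lt_trichotomy ω 0
    · have hstar : I * ω = star (I * ↑(-ω)) := by simp
      rw [hstar, star_dotProduct_tf_star_mulVec]
      simpa using h (-ω) (neg_pos.mpr hω) (star z)
    · have hcont : ContinuousAt (fun ω : ℝ => (star z ⬝ᵥ (tf A B C D (I * ω) *ᵥ z)).re) 0 := by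
        have htf : ContinuousAt (tf A B C D) (I * (0 : ℝ)) :=
          continuousAt_tf (hA.mem_resolventSet (by simp))
        exact hform.continuousAt.comp (htf.comp (f := fun ω : ℝ => I * (ω : ℂ)) (by fun_prop))
      refine ge_of_tendsto (hcont.tendsto.mono_left (nhdsWithin_le_nhds (s := Set.Ioi 0))) ?_
      filter_upwards [self_mem_nhdsWithin] with ω hω using h ω hω z
    · exact h ω hω z

end TransferFunction

section NegativeImaginary

open Complex

variable {n m : ℕ} {A : Matrix (Fin n) (Fin n) ℝ} {B : Matrix (Fin n) (Fin m) ℝ}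
  {C : Matrix (Fin m) (Fin n) ℝ} {D : Matrix (Fin m) (Fin m) ℝ}

theorem IsSNI.isNI (h : IsSNI A B C D) : IsNI A B C D := by
  have hiω : ∀ ω : ℝ, I * ω ∉ eigs A := fun ω hω => (h.1 _ hω).ne (by simp)
  refine ⟨fun μ hμ => ⟨?_, (h.1 μ hμ).le⟩, fun ω hω _ => (h.2 ω hω).posSemidef,
    fun ω _ hω => absurd hω (hiω ω)⟩
  rintro rfl
  exact (h.1 0 hμ).false

theorem IsNI.posSemidef (hA : IsHurwitz A) (h : IsNI A B C D) {ω : ℝ} (hω : 0 < ω) :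
    (I • (tf A B C D (I * ω) - (tf A B C D (I * ω))ᴴ)).PosSemidef :=
  h.2.1 ω hω fun hmem => (hA _ hmem).ne (by simp)

theorem IsNI.im_star_dotProduct_tf_mulVec_nonpos (hA : IsHurwitz A) (h : IsNI A B C D) {ω : ℝ}
    (hω : 0 < ω) (z : Fin m → ℂ) : (star z ⬝ᵥ (tf A B C D (I * ω) *ᵥ z)).im ≤ 0 := by
  have hquad := (h.posSemidef hA hω).re_dotProduct_nonneg z
  rw [smul_mulVec, sub_mulVec, dotProduct_smul, dotProduct_sub,
    star_dotProduct_conjTranspose_mulVec] at hquad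
  simp only [smul_eq_mul, RCLike.re_to_complex, I_mul_re, sub_im, RCLike.star_def, conj_im] at hquad
  linarith

open scoped MatrixOrder Matrix.Norms.L2Operator in
theorem IsNI.isHermitian_tf_zero (hA : IsHurwitz A) (h : IsNI A B C D) :
    (tf A B C D 0).IsHermitian := by
  set T := tf A B C D 0 with hT
  have hlim : Tendsto (fun ω : ℝ => I • (tf A B C D (I * ω) - (tf A B C D (I * ω))ᴴ))
      (𝓝[>] 0) (𝓝 (I • (T - Tᴴ))) := by
    have htf : Tendsto (fun ω : ℝ => tf A B C D (I * ω)) (𝓝[>] 0) (𝓝 T) := by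
      have hcont : ContinuousAt (tf A B C D) (I * (0 : ℝ)) :=
        continuousAt_tf (hA.mem_resolventSet (by simp))
      have := (hcont.comp (f := fun ω : ℝ => I * (ω : ℂ)) (by fun_prop)).tendsto
      simpa [Function.comp_def, hT] using this.mono_left (nhdsWithin_le_nhds (s := Set.Ioi 0))
    have hform : Continuous fun T : Matrix (Fin m) (Fin m) ℂ => I • (T - Tᴴ) := by fun_prop
    exact (hform.tendsto _).comp htf
  have hpos : (I • (T - Tᴴ)).PosSemidef := by
    refine nonneg_iff_posSemidef.mp (ge_of_tendsto hlim ?_)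
    filter_upwards [self_mem_nhdsWithin] with ω hω using (h.posSemidef hA hω).nonneg
  -- `T` is real, so `T - Tᴴ` has trace zero, which for a semidefinite matrix forces it to vanish.
  have htrace : (I • (T - Tᴴ)).trace = 0 := by
    rw [hT, tf_zero, conjTranspose_map_ofReal, transpose_map, trace_smul, trace_sub,
      trace_transpose, sub_self, smul_zero]
  have hzero := hpos.trace_eq_zero_iff.mp htrace
  exact (sub_eq_zero.mp ((smul_eq_zero.mp hzero).resolve_left I_ne_zero)).symm

open scoped MatrixOrder Matrix.Norms.L2Operator in
theorem IsNI.posSemidef_one_sub_tf_zero (hA : IsHurwitz A) (h : IsNI A B C D)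
    (hdc : ∀ μ ∈ eigs (D - C * A⁻¹ * B), μ.re ≤ 1) : (1 - tf A B C D 0).PosSemidef := by
  rw [← Matrix.le_iff, CFC.le_one_iff (R := ℝ) _ (h.isHermitian_tf_zero hA)]
  intro μ hμ
  rw [← spectrum.algebraMap_mem_iff ℂ, tf_zero] at hμ
  exact hdc _ hμ

-- The system `tf A B (-(C * A⁻¹)) 0` is the difference quotient `(Δ(0) - Δ(s)) / s`.
theorem IsNI.re_star_dotProduct_tf_neg_mul_inv_mulVec_nonneg (hA : IsHurwitz A)
    (h : IsNI A B C D) {s : ℂ} (hs : 0 ≤ s.re) (z : Fin m → ℂ) :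
    0 ≤ (star z ⬝ᵥ (tf A B (-(C * A⁻¹)) 0 s *ᵥ z)).re := by
  refine re_dotProduct_tf_mulVec_nonneg hA (fun ω hω z => ?_) hs z
  have hres : I * ω ∈ resolventSet ℂ (A.map ofReal) := hA.mem_resolventSet (by simp)
  have him := h.im_star_dotProduct_tf_mulVec_nonpos hA hω z
  have him₀ : (star z ⬝ᵥ (tf A B C D 0 *ᵥ z)).im = 0 :=
    (h.isHermitian_tf_zero hA).im_star_dotProduct_mulVec_self z
  have hquot := congrArg (fun T => (star z ⬝ᵥ (T *ᵥ z)).im)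
    (tf_zero_sub_tf (B := B) (C := C) (D := D) hA.isUnit hres)
  simp only [sub_mulVec, dotProduct_sub, sub_im, him₀, smul_mulVec, dotProduct_smul, smul_eq_mul,
    mul_assoc, I_mul_im, re_ofReal_mul] at hquot
  exact nonneg_of_mul_nonneg_right (by linarith) hω

theorem IsNI.re_star_mul_one_sub_tf_nonneg (hA : IsHurwitz A) (h : IsNI A B C D)
    (hdc : ∀ μ ∈ eigs (D - C * A⁻¹ * B), μ.re ≤ 1) {s : ℂ} (hs : 0 ≤ s.re) (z : Fin m → ℂ) :
    0 ≤ (star s * (star z ⬝ᵥ ((1 - tf A B C D s) *ᵥ z))).re := by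
  set α := star z ⬝ᵥ ((1 - tf A B C D 0) *ᵥ z)
  set β := star z ⬝ᵥ (tf A B (-(C * A⁻¹)) 0 s *ᵥ z)
  have hsplit : star z ⬝ᵥ ((1 - tf A B C D s) *ᵥ z) = α + s * β := by
    rw [← sub_add_sub_cancel _ (tf A B C D 0), tf_zero_sub_tf hA.isUnit (hA.mem_resolventSet hs),
      add_mulVec, dotProduct_add, smul_mulVec, dotProduct_smul, smul_eq_mul]
  obtain ⟨hα_re, hα_im⟩ : 0 ≤ α.re ∧ 0 = α.im :=
    le_def.mp ((h.posSemidef_one_sub_tf_zero hA hdc).dotProduct_mulVec_nonneg z)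
  have hβ_re : 0 ≤ β.re := h.re_star_dotProduct_tf_neg_mul_inv_mulVec_nonneg hA hs z
  calc 0 ≤ s.re * α.re + normSq s * β.re :=
        add_nonneg (mul_nonneg hs hα_re) (mul_nonneg (normSq_nonneg s) hβ_re)
    _ = (star s * (star z ⬝ᵥ ((1 - tf A B C D s) *ᵥ z))).re := by
        rw [hsplit, mul_add, ← mul_assoc, RCLike.star_def, ← normSq_eq_conj_mul_self, add_re,
          mul_re, re_ofReal_mul, ← hα_im, mul_zero, sub_zero, conj_re]

end NegativeImaginary

section ClosedLoop

theorem mem_spectrum_fromBlocks_iff {R k l : Type*} [CommRing R] [Fintype k] [DecidableEq k]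
    [Fintype l] [DecidableEq l] {A : Matrix k k R} {B : Matrix k l R} {C : Matrix l k R}
    {D : Matrix l l R} {s : R} (hs : s ∈ resolventSet R D) :
    s ∈ spectrum R (fromBlocks A B C D) ↔ s ∈ spectrum R (A + B * (s • 1 - D)⁻¹ * C) := by
  rw [spectrum.mem_resolventSet_iff, Algebra.algebraMap_eq_smul_one] at hs
  let := hs.invertible
  have hblocks :
      s • 1 - fromBlocks A B C D = fromBlocks (s • 1 - A) (-B) (-C) (s • 1 - D) := by
    simp [← fromBlocks_one, fromBlocks_smul, sub_eq_add_neg, fromBlocks_neg, fromBlocks_add]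
  rw [spectrum.mem_iff, spectrum.mem_iff, Algebra.algebraMap_eq_smul_one,
    Algebra.algebraMap_eq_smul_one, hblocks, isUnit_fromBlocks_iff_of_invertible₂₂,
    invOf_eq_nonsing_inv, Matrix.neg_mul, Matrix.neg_mul, Matrix.mul_neg, neg_neg, sub_sub]

variable {n : Type*} [Fintype n] [DecidableEq n] {m q : ℕ} {F Y : Matrix n n ℝ}
  {B : Matrix n (Fin m) ℝ} {C : Matrix (Fin m) n ℝ} {AΔ : Matrix (Fin q) (Fin q) ℝ}
  {BΔ : Matrix (Fin q) (Fin m) ℝ} {CΔ : Matrix (Fin m) (Fin q) ℝ} {DΔ : Matrix (Fin m) (Fin m) ℝ}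

theorem mem_eigs_closedLoop_iff {s : ℂ} (hs : s ∈ resolventSet ℂ (AΔ.map Complex.ofReal)) :
    s ∈ eigs (fromBlocks (F + B * DΔ * C) (B * CΔ) (BΔ * C) AΔ) ↔
      s ∈ spectrum ℂ (F.map Complex.ofReal +
        B.map Complex.ofReal * tf AΔ BΔ CΔ DΔ s * C.map Complex.ofReal) := by
  rw [eigs, fromBlocks_map, mem_spectrum_fromBlocks_iff hs, tf,
    Matrix.map_add _ Complex.ofReal_add]
  simp only [map_ofReal_mul, Matrix.mul_add, Matrix.add_mul, Matrix.mul_assoc, add_assoc, add_comm]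

theorem closedLoop_eq_mul (hY : IsUnit Y) (hB : B = -(F * Y * Cᵀ))
    (T : Matrix (Fin m) (Fin m) ℂ) :
    F.map Complex.ofReal + B.map Complex.ofReal * T * C.map Complex.ofReal =
      (F * Y).map Complex.ofReal * ((Y⁻¹ - Cᵀ * C).map Complex.ofReal +
        (C.map Complex.ofReal)ᴴ * (1 - T) * C.map Complex.ofReal) := by
  have hF : F = F * Y * Y⁻¹ :=
    (mul_nonsing_inv_cancel_right Y F ((isUnit_iff_isUnit_det Y).mp hY)).symm
  nth_rw 1 [hF]
  rw [hB, conjTranspose_map_ofReal, Matrix.map_sub _ Complex.ofReal_sub,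
    Matrix.map_neg _ Complex.ofReal_neg]
  simp only [map_ofReal_mul, Matrix.mul_add, Matrix.mul_sub, Matrix.sub_mul, Matrix.neg_mul,
    Matrix.mul_one, Matrix.mul_assoc]
  abel

theorem isHurwitz_closedLoop (hY : Y.PosDef) (hFY : (-(F * Y + (F * Y)ᵀ)).PosDef)
    (hB : B = -(F * Y * Cᵀ)) (hC : (1 - C * Y * Cᵀ).PosDef) (hA : IsHurwitz AΔ)
    (hΔ : IsNI AΔ BΔ CΔ DΔ) (hdc : ∀ μ ∈ eigs (DΔ - CΔ * AΔ⁻¹ * BΔ), μ.re ≤ 1) :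
    IsHurwitz (fromBlocks (F + B * DΔ * C) (B * CΔ) (BΔ * C) AΔ) := by
  intro s hs
  by_contra! hre
  have hG : ((Y⁻¹ - Cᵀ * C).map Complex.ofReal).PosDef :=
    posDef_map_ofReal (by simpa using posDef_inv_sub_conjTranspose_mul_self hY (by simpa using hC))
  rw [mem_eigs_closedLoop_iff (hA.mem_resolventSet hre), closedLoop_eq_mul hY.isUnit hB] at hs
  refine notMem_spectrum_mul_of_posDef_neg_add_conjTranspose ?_ (fun x => ?_) ?_ hs
  · rw [conjTranspose_map_ofReal, ← Matrix.map_add _ Complex.ofReal_add,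
      ← Matrix.map_neg _ Complex.ofReal_neg]
    exact posDef_map_ofReal hFY
  · obtain ⟨hGx, hGx_im⟩ := Complex.le_def.mp (hG.posSemidef.dotProduct_mulVec_nonneg x)
    have hΔx := hΔ.re_star_mul_one_sub_tf_nonneg hA hdc hre (C.map Complex.ofReal *ᵥ x)
    rw [add_mulVec, dotProduct_add, star_dotProduct_conjTranspose_mul_mul_mulVec, mul_add,
      Complex.add_re, Complex.mul_re, ← hGx_im, Complex.zero_im, mul_zero, sub_zero]
    exact add_nonneg (mul_nonneg hre hGx) hΔx
  · rintro rfl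
    have hΔ₀ := hΔ.posSemidef_one_sub_tf_zero hA hdc
    exact (hG.add_posSemidef (hΔ₀.conjTranspose_mul_mul_same _)).isUnit

end ClosedLoop

section LMI

variable {n m p : Type*} [Fintype n] [DecidableEq n] [Fintype p] {A Y : Matrix n n ℝ}
  {B₁ : Matrix n m ℝ} {B₂ : Matrix n p ℝ} {C₁ : Matrix m n ℝ} {M : Matrix p n ℝ} {ε : ℝ}

/-- The block matrix of the synthesis linear matrix inequality
`synthesisMatrix A B₁ B₂ C₁ Y M ε ⪯ 0`, in the decision variables `Y`, `M` and `ε`. -/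
def synthesisMatrix (A : Matrix n n ℝ) (B₁ : Matrix n m ℝ) (B₂ : Matrix n p ℝ) (C₁ : Matrix m n ℝ)
    (Y : Matrix n n ℝ) (M : Matrix p n ℝ) (ε : ℝ) : Matrix (n ⊕ m) (n ⊕ m) ℝ :=
  fromBlocks (A * Y + Y * Aᵀ + B₂ * M + Mᵀ * B₂ᵀ + ε • 1) (B₁ + A * Y * C₁ᵀ + B₂ * M * C₁ᵀ)
    (B₁ᵀ + C₁ * Y * Aᵀ + C₁ * Mᵀ * B₂ᵀ) 0

theorem eq_neg_mul_transpose_of_synthesisMatrix [Finite m]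
    (hlmi : (-synthesisMatrix A B₁ B₂ C₁ Y M ε).PosSemidef) :
    B₁ = -((A * Y + B₂ * M) * C₁ᵀ) := by
  have hoff : B₁ + A * Y * C₁ᵀ + B₂ * M * C₁ᵀ = 0 := by
    refine neg_eq_zero.mp (Matrix.ext fun i j => ?_)
    exact apply_eq_zero_of_posSemidef_of_diag_eq_zero hlmi (j := Sum.inr j)
      (by simp [synthesisMatrix]) (Sum.inl i)
  rw [Matrix.add_mul]
  exact eq_neg_of_add_eq_zero_left (by rwa [← add_assoc])

theorem posDef_neg_add_transpose_of_synthesisMatrix [Finite m] (hY : Y.IsSymm) (hε : 0 < ε)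
    (hlmi : (-synthesisMatrix A B₁ B₂ C₁ Y M ε).PosSemidef) :
    (-(A * Y + B₂ * M + (A * Y + B₂ * M)ᵀ)).PosDef := by
  have hblock : (-(A * Y + Y * Aᵀ + B₂ * M + Mᵀ * B₂ᵀ + ε • (1 : Matrix n n ℝ))).PosSemidef := by
    simpa [synthesisMatrix, fromBlocks_neg] using! hlmi.submatrix Sum.inl
  have hε₁ : (ε • (1 : Matrix n n ℝ)).PosDef := PosDef.one.smul hε
  convert hε₁.add_posSemidef hblock using 1
  rw [transpose_add, transpose_mul, transpose_mul, hY.eq]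
  abel

end LMI

theorem state_feedback_ni_synthesis_general {n p : Type*} [Fintype n] [DecidableEq n] [Fintype p]
    {m : ℕ} {A : Matrix n n ℝ} {B₁ : Matrix n (Fin m) ℝ} {B₂ : Matrix n p ℝ}
    {C₁ : Matrix (Fin m) n ℝ} {Y : Matrix n n ℝ} {M : Matrix p n ℝ} {ε : ℝ}
    (hY : Y.PosDef) (hε : 0 < ε)
    (hlmi : (-synthesisMatrix A B₁ B₂ C₁ Y M ε).PosSemidef)
    (hC : (-(C₁ * Y * C₁ᵀ - 1)).PosDef) {q : ℕ} {AΔ : Matrix (Fin q) (Fin q) ℝ}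
    {BΔ : Matrix (Fin q) (Fin m) ℝ} {CΔ : Matrix (Fin m) (Fin q) ℝ}
    {DΔ : Matrix (Fin m) (Fin m) ℝ} (hA : IsHurwitz AΔ) (hΔ : IsNI AΔ BΔ CΔ DΔ)
    (hdc : ∀ μ ∈ eigs (DΔ - CΔ * AΔ⁻¹ * BΔ), μ.re ≤ 1) :
    IsHurwitz (fromBlocks (A + B₂ * (M * Y⁻¹) + B₁ * DΔ * C₁) (B₁ * CΔ) (BΔ * C₁) AΔ) := by
  have hFY : (A + B₂ * (M * Y⁻¹)) * Y = A * Y + B₂ * M := by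
    rw [Matrix.add_mul, Matrix.mul_assoc B₂,
      nonsing_inv_mul_cancel_right Y M ((isUnit_iff_isUnit_det Y).mp hY.isUnit)]
  have hYsymm : Y.IsSymm := by simpa [IsHermitian, IsSymm] using hY.isHermitian
  refine isHurwitz_closedLoop hY ?_ ?_ (by rwa [neg_sub] at hC) hA hΔ hdc
  · rw [hFY]
    exact posDef_neg_add_transpose_of_synthesisMatrix hYsymm hε hlmi
  · rw [hFY]
    exact eq_neg_mul_transpose_of_synthesisMatrix hlmi

/-- Robust state-feedback synthesis for NI systems. -/
theorem state_feedback_ni_synthesis {n m p : ℕ}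
    (A : Matrix (Fin n) (Fin n) ℝ) (B₁ : Matrix (Fin n) (Fin m) ℝ)
    (B₂ : Matrix (Fin n) (Fin p) ℝ) (C₁ : Matrix (Fin m) (Fin n) ℝ)
    (Y : Matrix (Fin n) (Fin n) ℝ) (M : Matrix (Fin p) (Fin n) ℝ) (ε : ℝ)
    (hY : Y.PosDef) (hε : 0 < ε)
    (hlmi : (-(Matrix.fromBlocks
        (A * Y + Y * Aᵀ + B₂ * M + Mᵀ * B₂ᵀ + ε • (1 : Matrix (Fin n) (Fin n) ℝ))
        (B₁ + A * Y * C₁ᵀ + B₂ * M * C₁ᵀ)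
        (B₁ᵀ + C₁ * Y * Aᵀ + C₁ * Mᵀ * B₂ᵀ)
        (0 : Matrix (Fin m) (Fin m) ℝ))).PosSemidef)
    (hdc : (-(C₁ * Y * C₁ᵀ - 1)).PosDef) :
    ∀ (q : ℕ) (AΔ : Matrix (Fin q) (Fin q) ℝ) (BΔ : Matrix (Fin q) (Fin m) ℝ)
      (CΔ : Matrix (Fin m) (Fin q) ℝ) (DΔ : Matrix (Fin m) (Fin m) ℝ),
      IsMinimal AΔ BΔ CΔ → IsSNI AΔ BΔ CΔ DΔ → DΔ.PosSemidef →
      (∀ μ ∈ eigs (DΔ - CΔ * AΔ⁻¹ * BΔ), μ.im = 0 ∧ -1 ≤ μ.re ∧ μ.re ≤ 1) →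
      IsHurwitz (Matrix.fromBlocks
        (A + B₂ * (M * Y⁻¹) + B₁ * DΔ * C₁) (B₁ * CΔ) (BΔ * C₁) AΔ) := by
  intro q AΔ BΔ CΔ DΔ _ hΔ _ hdc₀
  exact state_feedback_ni_synthesis_general hY hε hlmi hdc hΔ.1 hΔ.isNI fun μ hμ => (hdc₀ μ hμ).2.2
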